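/- Let ψ, φ : ℝ³ → ℝ be continuous with ψ ≥ 0. Suppose u₁, u₂ ∈ C²(ℝ³) both satisfy the semilinear elliptic equation Δu = ψ u³ − φ on ℝ³, and suppose there exists a constant C > 0 such that |u₁(x)| ≤ C/|x| and |u₂(x)| ≤ C/|x| for all |x| ≥ 1. Then u₁ = u₂ on ℝ³. -/

import Mathlib

/-- Partial derivative in the `i`-th coordinate direction. -/
noncomputable def pderiv' {d : ℕ} (i : Fin d) (f : EuclideanSpace ℝ (Fin d) → ℝ) :
    EuclideanSpace ℝ (Fin d) → ℝ :=
  fun x => fderiv ℝ f x (EuclideanSpace.single i 1)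

/-- The Laplacian `Δf = Σ_i ∂_i ∂_i f`. -/
noncomputable def lap {d : ℕ} (f : EuclideanSpace ℝ (Fin d) → ℝ) :
    EuclideanSpace ℝ (Fin d) → ℝ :=
  fun x => ∑ i : Fin d, pderiv' i (pderiv' i f) x

/-!
Where the difference `w = u₁ - u₂` of two solutions is positive, monotonicity of the right-hand side
in `u` makes `w` subharmonic. For `c > 0` the open set `{w > c}` is bounded because `w` vanishes at
infinity, and `w = c` on its boundary, so the weak maximum principle forces it to be empty. Hence
`u₁ ≤ u₂`, and the situation is symmetric.
-/

open Filter Topology Set Bornology Module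
open scoped Laplacian

section SecondDerivativeTest

theorem deriv_deriv_nonpos_of_isLocalMax {g : ℝ → ℝ} {a : ℝ} (hg : ContinuousAt g a)
    (hmax : IsLocalMax g a) : deriv (deriv g) a ≤ 0 := by
  by_contra! hpos
  have hmin : IsLocalMin g a := isLocalMin_of_deriv_deriv_pos hpos hmax.deriv_eq_zero hg
  have hconst : g =ᶠ[𝓝 a] fun _ ↦ g a := by
    filter_upwards [hmax, hmin] with t hle hge using le_antisymm hle hge
  have hzero : deriv (deriv g) a = 0 := by simpa using hconst.deriv.deriv_eq
  exact hpos.ne' hzero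

variable {E F : Type*} [NormedAddCommGroup E] [NormedSpace ℝ E]
  [NormedAddCommGroup F] [NormedSpace ℝ F]

theorem fderiv_fderiv_apply_const {f : E → F} {x : E} (hf : ContDiffAt ℝ 2 f x) (v w : E) :
    fderiv ℝ (fun y ↦ fderiv ℝ f y v) x w = iteratedFDeriv ℝ 2 f x ![w, v] := by
  have hdiff : DifferentiableAt ℝ (fderiv ℝ f) x :=
    (hf.fderiv_right (m := 1) (by norm_num)).differentiableAt one_ne_zero
  simp [fderiv_clm_apply hdiff (differentiableAt_const v), iteratedFDeriv_two_apply]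

theorem deriv_deriv_comp_add_smul {f : E → F} {x : E} (hf : ContDiffAt ℝ 2 f x) (v : E) :
    deriv (deriv fun t : ℝ ↦ f (x + t • v)) 0 = iteratedFDeriv ℝ 2 f x ![v, v] := by
  have hline (t : ℝ) : HasDerivAt (fun s : ℝ ↦ x + s • v) v t := by
    simpa using ((hasDerivAt_id t).smul_const v).const_add x
  have hline_zero : Tendsto (fun t : ℝ ↦ x + t • v) (𝓝 0) (𝓝 x) := by
    simpa using (hline 0).continuousAt.tendsto
  have hfirst : deriv (fun t : ℝ ↦ f (x + t • v)) =ᶠ[𝓝 0] fun t ↦ fderiv ℝ f (x + t • v) v := by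
    filter_upwards [hline_zero.eventually (hf.eventually (by simp))] with t ht
    exact ((ht.differentiableAt two_ne_zero).hasFDerivAt.comp_hasDerivAt t (hline t)).deriv
  have hsecond : DifferentiableAt ℝ (fun y ↦ fderiv ℝ f y v) (x + (0 : ℝ) • v) := by
    have := (hf.fderiv_right (m := 1) (by norm_num)).differentiableAt one_ne_zero
    simpa using this.clm_apply (differentiableAt_const v)
  calc deriv (deriv fun t : ℝ ↦ f (x + t • v)) 0
      = deriv (fun t : ℝ ↦ fderiv ℝ f (x + t • v) v) 0 := hfirst.deriv_eq
    _ = fderiv ℝ (fun y ↦ fderiv ℝ f y v) (x + (0 : ℝ) • v) v := by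
        simpa only [Function.comp_def] using
          (hsecond.hasFDerivAt.comp_hasDerivAt 0 (hline 0)).deriv
    _ = iteratedFDeriv ℝ 2 f x ![v, v] := by
        rw [zero_smul, add_zero, fderiv_fderiv_apply_const hf]

theorem iteratedFDeriv_two_nonpos_of_isLocalMax {f : E → ℝ} {x : E} (hf : ContDiffAt ℝ 2 f x)
    (hmax : IsLocalMax f x) (v : E) : iteratedFDeriv ℝ 2 f x ![v, v] ≤ 0 := by
  have hline : ContinuousAt (fun t : ℝ ↦ x + t • v) 0 := by fun_prop
  have hx : x + (0 : ℝ) • v = x := by simp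
  rw [← deriv_deriv_comp_add_smul hf]
  apply deriv_deriv_nonpos_of_isLocalMax
  · exact ContinuousAt.comp' (by simpa only [hx] using hf.continuousAt) hline
  · exact IsLocalMax.comp_continuous (g := fun t : ℝ ↦ x + t • v) (by simpa only [hx]) hline

end SecondDerivativeTest

section MaximumPrinciple

variable {E : Type*} [NormedAddCommGroup E] [InnerProductSpace ℝ E]

theorem iteratedFDeriv_two_norm_sq (x v w : E) :
    iteratedFDeriv ℝ 2 (fun y : E ↦ ‖y‖ ^ 2) x ![v, w] = 2 * inner ℝ v w := by
  have hderiv : HasFDerivAt (fun y : E ↦ 2 * inner ℝ w y) ((2 : ℝ) • innerSL ℝ w) x :=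
    ((innerSL ℝ w).hasFDerivAt (x := x)).const_mul (2 : ℝ)
  rw [← fderiv_fderiv_apply_const (contDiff_norm_sq ℝ).contDiffAt]
  simp [fderiv_norm_sq_apply, real_inner_comm w, hderiv.fderiv]

variable [FiniteDimensional ℝ E]

theorem laplacian_nonpos_of_isLocalMax {f : E → ℝ} {x : E} (hf : ContDiffAt ℝ 2 f x)
    (hmax : IsLocalMax f x) : Δ f x ≤ 0 := by
  rw [InnerProductSpace.laplacian_eq_iteratedFDeriv_stdOrthonormalBasis]
  exact Finset.sum_nonpos fun i _ ↦ iteratedFDeriv_two_nonpos_of_isLocalMax hf hmax _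

theorem laplacian_norm_sq (x : E) : Δ (fun y : E ↦ ‖y‖ ^ 2) x = 2 * finrank ℝ E := by
  simp [InnerProductSpace.laplacian_eq_iteratedFDeriv_stdOrthonormalBasis,
    iteratedFDeriv_two_norm_sq, mul_comm]

variable {U : Set E} {w : E → ℝ} {c : ℝ}

theorem le_of_laplacian_pos_of_le_frontier (hU : IsOpen U) (hbdd : IsBounded U)
    (hcont : ContinuousOn w (closure U)) (hw : ContDiffOn ℝ 2 w U) (hlap : ∀ x ∈ U, 0 < Δ w x)
    (hfrontier : ∀ x ∈ frontier U, w x ≤ c) {x : E} (hx : x ∈ closure U) : w x ≤ c := by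
  obtain ⟨y, hy, hmax⟩ := hbdd.isCompact_closure.exists_isMaxOn ⟨x, hx⟩ hcont
  have hyU : y ∉ U := fun hyU ↦ by
    have hnhds : U ∈ 𝓝 y := hU.mem_nhds hyU
    have hlocal : IsLocalMax w y := hmax.isLocalMax (mem_of_superset hnhds subset_closure)
    exact (hlap y hyU).not_ge (laplacian_nonpos_of_isLocalMax (hw.contDiffAt hnhds) hlocal)
  exact (hmax hx).trans (hfrontier y (hU.frontier_eq ▸ ⟨hy, hyU⟩))

theorem le_of_laplacian_nonneg_of_le_frontier [Nontrivial E] (hU : IsOpen U) (hbdd : IsBounded U)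
    (hcont : ContinuousOn w (closure U)) (hw : ContDiffOn ℝ 2 w U) (hlap : ∀ x ∈ U, 0 ≤ Δ w x)
    (hfrontier : ∀ x ∈ frontier U, w x ≤ c) {x : E} (hx : x ∈ closure U) : w x ≤ c := by
  obtain ⟨R, hR⟩ := hbdd.closure.exists_norm_le
  -- `w + ε‖·‖²` is strictly subharmonic for every `ε > 0`; then let `ε → 0`.
  have hperturbed (ε : ℝ) (hε : 0 < ε) : w x + ε * ‖x‖ ^ 2 ≤ c + ε * R ^ 2 := by
    have hsq : ContDiff ℝ 2 fun y : E ↦ ‖y‖ ^ 2 := contDiff_norm_sq ℝ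
    refine le_of_laplacian_pos_of_le_frontier (w := w + ε • fun y : E ↦ ‖y‖ ^ 2) hU hbdd
      (hcont.add (hsq.continuous.const_smul ε).continuousOn)
      (hw.add (hsq.const_smul ε).contDiffOn) (fun y hy ↦ ?_) (fun y hy ↦ ?_) hx
    · have hsmul : ContDiffAt ℝ 2 (ε • fun y : E ↦ ‖y‖ ^ 2) y := (hsq.const_smul ε).contDiffAt
      rw [(hw.contDiffAt (hU.mem_nhds hy)).laplacian_add hsmul,
        InnerProductSpace.laplacian_smul ε hsq.contDiffAt, laplacian_norm_sq]
      have hdim : (0 : ℝ) < finrank ℝ E := Nat.cast_pos.2 finrank_pos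
      exact add_pos_of_nonneg_of_pos (hlap y hy) (smul_pos hε (by positivity))
    · have hyR : ‖y‖ ≤ R := hR y (frontier_subset_closure hy)
      exact add_le_add (hfrontier y hy) (by simp only [Pi.smul_apply, smul_eq_mul]; gcongr)
  have hlim (a b : ℝ) : Tendsto (fun ε : ℝ ↦ a + ε * b) (𝓝[>] 0) (𝓝 a) := by
    have : Continuous fun ε : ℝ ↦ a + ε * b := by fun_prop
    simpa using this.continuousWithinAt (s := Ioi 0) (x := 0) |>.tendsto
  exact le_of_tendsto_of_tendsto (hlim _ _) (hlim _ _)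
    (eventually_mem_nhdsWithin.mono hperturbed)

theorem nonpos_of_laplacian_nonneg_of_pos [Nontrivial E] (hw : ContDiff ℝ 2 w)
    (hlap : ∀ x, 0 < w x → 0 ≤ Δ w x) (hinfty : ∀ c > 0, ∀ᶠ x in cocompact E, w x ≤ c) (x : E) :
    w x ≤ 0 := by
  refine le_of_forall_gt_imp_ge_of_dense fun c hc ↦ ?_
  by_contra! hx
  have hbdd : IsBounded {y | c < w y} := by
    rw [isBounded_def, Metric.cobounded_eq_cocompact]
    filter_upwards [hinfty c hc] with y hy using hy.not_gt
  have hfrontier : ∀ y ∈ frontier {y | c < w y}, w y ≤ c := fun y hy ↦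
    (frontier_lt_subset_eq continuous_const hw.continuous hy).ge
  exact hx.not_ge <| le_of_laplacian_nonneg_of_le_frontier
    (isOpen_lt continuous_const hw.continuous) hbdd hw.continuous.continuousOn hw.contDiffOn
    (fun y hy ↦ hlap y (hc.trans hy)) hfrontier (subset_closure hx)

end MaximumPrinciple

section Semilinear

variable {E : Type*} [NormedAddCommGroup E] [InnerProductSpace ℝ E] [FiniteDimensional ℝ E]
  [Nontrivial E] {F : E → ℝ → ℝ} {u v : E → ℝ}

theorem subsolution_le_supersolution (hF : ∀ x, Monotone (F x))
    (hu : ContDiff ℝ 2 u) (hv : ContDiff ℝ 2 v)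
    (hsub : ∀ x, F x (u x) ≤ Δ u x) (hsuper : ∀ x, Δ v x ≤ F x (v x))
    (hinfty : ∀ c > 0, ∀ᶠ x in cocompact E, u x - v x ≤ c) : u ≤ v := fun x ↦ by
  refine sub_nonpos.1 <| nonpos_of_laplacian_nonneg_of_pos (hu.sub hv) (fun y hy ↦ ?_) hinfty x
  have hF_le : F y (v y) ≤ F y (u y) := hF y (sub_pos.1 hy).le
  change 0 ≤ Δ (u - v) y
  rw [hu.contDiffAt.laplacian_sub hv.contDiffAt]
  linarith [hsub y, hsuper y]

theorem stmt13_general (hF : ∀ x, Monotone (F x)) (hu : ContDiff ℝ 2 u) (hv : ContDiff ℝ 2 v)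
    (hequ : ∀ x, Δ u x = F x (u x)) (heqv : ∀ x, Δ v x = F x (v x))
    (hinfty : Tendsto (fun x ↦ u x - v x) (cocompact E) (𝓝 0)) : u = v := by
  have hinfty' : Tendsto (fun x ↦ v x - u x) (cocompact E) (𝓝 0) := by simpa using hinfty.neg
  apply le_antisymm
  · exact subsolution_le_supersolution hF hu hv (fun x ↦ (hequ x).ge) (fun x ↦ (heqv x).le)
      fun c hc ↦ hinfty.eventually_le_const hc
  · exact subsolution_le_supersolution hF hv hu (fun x ↦ (heqv x).ge) (fun x ↦ (hequ x).le)
      fun c hc ↦ hinfty'.eventually_le_const hc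

end Semilinear

theorem tendsto_cocompact_zero_of_norm_le_div_norm {E F : Type*} [SeminormedAddCommGroup E]
    [ProperSpace E] [SeminormedAddCommGroup F] {u : E → F} {R C : ℝ}
    (hu : ∀ x, R ≤ ‖x‖ → ‖u x‖ ≤ C / ‖x‖) : Tendsto u (cocompact E) (𝓝 0) :=
  have hnorm : Tendsto (fun x : E ↦ ‖x‖) (cocompact E) atTop := tendsto_norm_cocompact_atTop
  squeeze_zero_norm' ((hnorm.eventually_ge_atTop R).mono hu) (hnorm.const_div_atTop C)

theorem lap_eq_laplacian {d : ℕ} {f : EuclideanSpace ℝ (Fin d) → ℝ} (hf : ContDiff ℝ 2 f) :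
    lap f = Δ f := by
  rw [InnerProductSpace.laplacian_eq_iteratedFDeriv_orthonormalBasis f
    (EuclideanSpace.basisFun (Fin d) ℝ)]
  funext x
  refine Finset.sum_congr rfl fun i _ ↦ ?_
  rw [EuclideanSpace.basisFun_apply]
  exact fderiv_fderiv_apply_const hf.contDiffAt _ _

theorem monotone_mul_pow_sub {a : ℝ} (ha : 0 ≤ a) (b : ℝ) {n : ℕ} (hn : Odd n) :
    Monotone fun t : ℝ ↦ a * t ^ n - b :=
  (hn.strictMono_pow.monotone.const_mul ha).add_const (-b)

/-- Uniqueness of decaying equilibrium solutions of `Δu = ψ u³ − φ` on `ℝ³` with `ψ ≥ 0`: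
two `C²` solutions decaying like `C/|x|` at infinity coincide. -/
theorem stmt13 (ψ φ : EuclideanSpace ℝ (Fin 3) → ℝ)
    (hψc : Continuous ψ) (hψ0 : ∀ x, 0 ≤ ψ x) (hφc : Continuous φ)
    (u₁ u₂ : EuclideanSpace ℝ (Fin 3) → ℝ)
    (hu₁ : ContDiff ℝ 2 u₁) (hu₂ : ContDiff ℝ 2 u₂)
    (heq₁ : ∀ x, lap u₁ x = ψ x * (u₁ x) ^ 3 - φ x)
    (heq₂ : ∀ x, lap u₂ x = ψ x * (u₂ x) ^ 3 - φ x)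
    (C : ℝ) (hC : 0 < C)
    (hdecay₁ : ∀ x : EuclideanSpace ℝ (Fin 3), 1 ≤ ‖x‖ → |u₁ x| ≤ C / ‖x‖)
    (hdecay₂ : ∀ x : EuclideanSpace ℝ (Fin 3), 1 ≤ ‖x‖ → |u₂ x| ≤ C / ‖x‖) :
    u₁ = u₂ := by
  have hu₁_zero := tendsto_cocompact_zero_of_norm_le_div_norm (u := u₁) hdecay₁
  have hu₂_zero := tendsto_cocompact_zero_of_norm_le_div_norm (u := u₂) hdecay₂
  exact stmt13_general (fun x ↦ monotone_mul_pow_sub (hψ0 x) (φ x) (by decide)) hu₁ hu₂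
    (lap_eq_laplacian hu₁ ▸ heq₁) (lap_eq_laplacian hu₂ ▸ heq₂)
    (by simpa only [sub_zero] using hu₁_zero.sub hu₂_zero)
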